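/- Let η be a free ultrafilter on ℕ, t ∈ [0,1), θ = 2^t, and let 𝒰 be the image ultrafilter of η under the map n ↦ ⌊θ·2^n⌋. Then the following are equivalent: (i) the density measure ν_{(η,t)} has the additive property and 𝒰 contains an infinite set X ⊆ ℕ whose increasing enumeration m_1 < m_2 < ⋯ satisfies m_{k+1}/m_k → ∞; (ii) η contains a thin set. -/

import Mathlib

open Filter Topology

noncomputable section

/-- The density measure `ν_{(η,t)}(A) = η-lim_n |A ∩ [1,⌊2^t·2^n⌋]| / (2^t·2^n)`. -/
def nuDen (η : Ultrafilter ℕ) (t : ℝ) (A : Set ℕ) : ℝ :=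
  limUnder (η : Filter ℕ)
    (fun n : ℕ =>
      (Nat.card (A ∩ Set.Icc 1 ⌊(2:ℝ) ^ t * 2 ^ n⌋₊ : Set ℕ) : ℝ) / ((2:ℝ) ^ t * 2 ^ n))

/-- A set function `ν` on `𝒫(ℕ)` has the additive property if for every increasing
sequence `A₁ ⊆ A₂ ⊆ ⋯` there is `B ⊆ ℕ` with `ν(B) = lim_i ν(A_i)` and
`ν(A_i \ B) = 0` for all `i`. -/
def AddProp (ν : Set ℕ → ℝ) : Prop :=
  ∀ A : ℕ → Set ℕ, (∀ i, A i ⊆ A (i + 1)) →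
    ∃ B : Set ℕ, Tendsto (fun i => ν (A i)) atTop (𝓝 (ν B)) ∧ ∀ i, ν (A i \ B) = 0

/-- `A ⊆ ℕ` is thin if `A ∩ (A + m)` is finite for every `m ≥ 1`. -/
def ThinSet (A : Set ℕ) : Prop :=
  ∀ m : ℕ, 1 ≤ m → (A ∩ ((fun x => x + m) '' A)).Finite

def ff (θ : ℝ) (n : ℕ) : ℕ := ⌊θ * 2 ^ n⌋₊

def dn (θ : ℝ) (S : Set ℕ) (n : ℕ) : ℝ :=
  (Nat.card (S ∩ Set.Icc 1 ⌊θ * 2 ^ n⌋₊ : Set ℕ) : ℝ) / (θ * 2 ^ n)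

lemma card_aux (S T : Set ℕ) (M N : ℕ) (h : ∀ x, M < x → x ≤ N → x ∈ S → x ∈ T) :
    Nat.card (S ∩ Set.Icc 1 N : Set ℕ) ≤ Nat.card (T ∩ Set.Icc 1 N : Set ℕ) + M := by
  have hsub : S ∩ Set.Icc 1 N ⊆ (T ∩ Set.Icc 1 N) ∪ Set.Icc 1 M := by
    rintro x ⟨hx, h1, h2⟩
    by_cases hM : x ≤ M
    · exact Or.inr ⟨h1, hM⟩
    · exact Or.inl ⟨h x (by omega) h2 hx, h1, h2⟩
  have hf : ((T ∩ Set.Icc 1 N) ∪ Set.Icc 1 M).Finite :=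
    ((Set.finite_Icc 1 N).inter_of_right T).union (Set.finite_Icc 1 M)
  have h1 := Set.ncard_le_ncard hsub hf
  have h2 := Set.ncard_union_le (T ∩ Set.Icc 1 N) (Set.Icc 1 M)
  have h3 : (Set.Icc 1 M).ncard = M := by
    rw [Set.ncard_eq_toFinset_card']; simp
  simp only [Nat.card_coe_set_eq]
  omega

lemma pos_aux {θ : ℝ} (hθ : 1 ≤ θ) (n : ℕ) : 0 < θ * 2 ^ n := by positivity

lemma dn_nonneg {θ : ℝ} (hθ : 1 ≤ θ) (S : Set ℕ) (n : ℕ) : 0 ≤ dn θ S n :=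
  div_nonneg (Nat.cast_nonneg _) (pos_aux hθ n).le

lemma dn_empty (θ : ℝ) (n : ℕ) : dn θ ∅ n = 0 := by simp [dn]

lemma dn_aux {θ : ℝ} (hθ : 1 ≤ θ) (S T : Set ℕ) (n d : ℕ) (hd : d ≤ n)
    (h : ∀ x, ff θ (n - d) < x → x ≤ ff θ n → x ∈ S → x ∈ T) :
    dn θ S n ≤ dn θ T n + (1 / 2) ^ d := by
  have h1 := card_aux S T _ _ h
  have h2 : (Nat.card (S ∩ Set.Icc 1 (ff θ n) : Set ℕ) : ℝ) ≤
    Nat.card (T ∩ Set.Icc 1 (ff θ n) : Set ℕ) + ff θ (n - d) := by exact_mod_cast h1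
  have h3 : (ff θ (n - d) : ℝ) ≤ θ * 2 ^ (n - d) := Nat.floor_le (pos_aux hθ _).le
  have h4 : (2 : ℝ) ^ n = 2 ^ (n - d) * 2 ^ d := by rw [← pow_add]; congr 1; omega
  have h5 : θ * 2 ^ (n - d) = (1 / 2) ^ d * (θ * 2 ^ n) := by
    rw [h4, one_div, inv_pow]; field_simp
  have hp := pos_aux hθ n
  unfold dn
  rw [div_le_iff₀ hp, add_mul, div_mul_cancel₀ _ hp.ne', ← h5]
  unfold ff at h2 h3
  linarith

lemma dn_mono {θ : ℝ} (hθ : 1 ≤ θ) {S T : Set ℕ} (h : S ⊆ T) (n : ℕ) :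
    dn θ S n ≤ dn θ T n := by
  have h1 := card_aux S T 0 ⌊θ * 2 ^ n⌋₊ (fun x _ _ hx => h hx)
  unfold dn
  have := pos_aux hθ n
  gcongr
  omega

lemma dn_le_one {θ : ℝ} (hθ : 1 ≤ θ) (S : Set ℕ) (n : ℕ) : dn θ S n ≤ 1 := by
  have h := dn_aux hθ S ∅ n 0 (by omega) (by intro x h1 h2; simp at h1; omega)
  simpa [dn_empty] using h

lemma tendsto_nu (η : Ultrafilter ℕ) (t : ℝ) (hθ : 1 ≤ (2:ℝ) ^ t) (S : Set ℕ) :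
    Tendsto (dn ((2:ℝ) ^ t) S) (η : Filter ℕ) (𝓝 (nuDen η t S)) := by
  have hc : IsCompact (Set.Icc (0:ℝ) 1) := isCompact_Icc
  obtain ⟨x, _, hx⟩ := hc.ultrafilter_le_nhds (η.map (dn ((2:ℝ) ^ t) S)) (by
    rw [le_principal_iff]
    exact Filter.mem_map.2 (Filter.mem_of_superset Filter.univ_mem
      (fun n _ => ⟨dn_nonneg hθ S n, dn_le_one hθ S n⟩)))
  exact tendsto_nhds_limUnder ⟨x, hx⟩

lemma thin_gap {A : Set ℕ} (hA : ThinSet A) (d : ℕ) :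
    ∀ᶠ n in Filter.cofinite, n ∈ A → ∀ m ∈ A, m < n → m + d ≤ n := by
  have hf : (⋃ k ∈ Finset.Icc 1 d, (A ∩ ((fun x => x + k) '' A))).Finite := by
    apply Set.Finite.biUnion (Finset.finite_toSet _)
    intro k hk
    exact hA k (by simp at hk; omega)
  refine hf.subset ?_
  intro n hn
  simp only [Set.mem_compl_iff, Set.mem_ofPred_eq] at hn
  push Not at hn
  obtain ⟨hnA, m, hm, hlt, h⟩ := hn
  simp only [Set.mem_iUnion]
  exact ⟨n - m, by simp; omega, hnA, m, hm, by simp; omega⟩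

lemma diag (η : Ultrafilter ℕ) (hη : (η : Filter ℕ) ≤ Filter.cofinite)
    (D : ℕ → ℕ → ℝ) (a : ℕ → ℝ) (α : ℝ) (hD : ∀ i, Tendsto (D i) (η : Filter ℕ) (𝓝 (a i)))
    (ha : Tendsto a atTop (𝓝 α)) :
    ∃ g : ℕ → ℕ, Tendsto g (η : Filter ℕ) atTop ∧
      Tendsto (fun n => D (g n) n) (η : Filter ℕ) (𝓝 α) := by
  classical
  have hη' : (η : Filter ℕ) ≤ atTop := by rwa [← Nat.cofinite_eq_atTop]
  let P : ℕ → ℕ → Prop := fun n i => |D i n - a i| < 1 / ((i : ℝ) + 1)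
  let g : ℕ → ℕ := fun n => Nat.findGreatest (P n) n
  have hg : Tendsto g (η : Filter ℕ) atTop := by
    rw [tendsto_atTop]
    intro k
    have h1 : ∀ᶠ n in (η : Filter ℕ), P n k := by
      have := Metric.tendsto_nhds.1 (hD k) (1 / ((k : ℝ) + 1)) (by positivity)
      simpa [Real.dist_eq, P] using this
    filter_upwards [h1, hη' (eventually_ge_atTop k)] with n h1 h2
    exact Nat.le_findGreatest h2 h1
  refine ⟨g, hg, ?_⟩
  have h0 : Tendsto (fun n => D (g n) n - a (g n)) (η : Filter ℕ) (𝓝 0) := by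
    apply squeeze_zero_norm' (a := fun n => 1 / ((g n : ℝ) + 1))
    · filter_upwards [hg.eventually (eventually_ge_atTop 1)] with n hn
      have : P n (g n) := Nat.findGreatest_of_ne_zero (m := g n) rfl (by omega)
      exact this.le
    · exact tendsto_one_div_add_atTop_nhds_zero_nat.comp hg
  simpa using h0.add (ha.comp hg)

lemma addprop_of_thin (η : Ultrafilter ℕ) (hη : (η : Filter ℕ) ≤ Filter.cofinite)
    (t : ℝ) (hθ : 1 ≤ (2:ℝ) ^ t) (A : Set ℕ) (hA : A ∈ η) (hT : ThinSet A) :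
    AddProp (nuDen η t) := by
  intro C hC
  set θ := (2:ℝ) ^ t with hθdef
  have hη' : (η : Filter ℕ) ≤ atTop := by rwa [← Nat.cofinite_eq_atTop]
  have hCm : Monotone C := monotone_nat_of_le_succ hC
  have hν := tendsto_nu η t hθ
  have hmono : Monotone (fun i => nuDen η t (C i)) := fun i j hij =>
    le_of_tendsto_of_tendsto' (hν (C i)) (hν (C j)) (fun n => dn_mono hθ (hCm hij) n)
  have hbdd : BddAbove (Set.range (fun i => nuDen η t (C i))) := by
    refine ⟨1, ?_⟩
    rintro _ ⟨i, rfl⟩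
    exact le_of_tendsto' (hν (C i)) (fun n => dn_le_one hθ _ n)
  have hlim := tendsto_atTop_ciSup hmono hbdd
  set α := ⨆ i, nuDen η t (C i)
  obtain ⟨g, hg, hgD⟩ := diag η hη (fun i => dn θ (C i)) _ α (fun i => hν (C i)) hlim
  let B : Set ℕ := {x | ∃ n ∈ A, (∀ m ∈ A, m < n → ff θ m < x) ∧ x ≤ ff θ n ∧ x ∈ C (g n)}
  have hffm : Monotone (ff θ) := fun a b hab => by
    unfold ff
    have : 0 < θ := by linarith
    gcongr
    norm_num
  have hB : ∀ d n, n ∈ A → (∀ m ∈ A, m < n → m + d ≤ n) → d ≤ n →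
      ∀ x, ff θ (n - d) < x → x ≤ ff θ n → (x ∈ B ↔ x ∈ C (g n)) := by
    intro d n hn hgap hd x h1 h2
    have key : ∀ m ∈ A, m < n → ff θ m < x := fun m hm hmn =>
      (hffm (by have := hgap m hm hmn; omega : m ≤ n - d)).trans_lt h1
    constructor
    · rintro ⟨n', hn', h3, h4, h5⟩
      have : n' = n := by
        rcases lt_trichotomy n' n with h | h | h
        · have := key n' hn' h; omega
        · exact h
        · have := h3 n hn h; omega
      rwa [this] at h5
    · intro h
      exact ⟨n, hn, key, h2, h⟩
  have hsmall : ∀ ε > (0:ℝ), ∃ d : ℕ, ((1:ℝ) / 2) ^ d < ε := fun ε hε =>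
    exists_pow_lt_of_lt_one hε (by norm_num)
  have hev : ∀ d : ℕ, ∀ᶠ n in (η : Filter ℕ), n ∈ A ∧ (∀ m ∈ A, m < n → m + d ≤ n) ∧ d ≤ n := by
    intro d
    filter_upwards [hη (thin_gap hT d), hη' (eventually_ge_atTop d), hA] with n h1 h2 h3
    exact ⟨h3, h1 h3, h2⟩
  refine ⟨B, ?_, ?_⟩
  · have hdiff : Tendsto (fun n => dn θ B n - dn θ (C (g n)) n) (η : Filter ℕ) (𝓝 0) := by
      rw [Metric.tendsto_nhds]
      intro ε hε
      obtain ⟨d, hd⟩ := hsmall ε hε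
      filter_upwards [hev d] with n ⟨h1, h2, h3⟩
      have e1 := dn_aux hθ B (C (g n)) n d h3 (fun x hx hx' => (hB d n h1 h2 h3 x hx hx').1)
      have e2 := dn_aux hθ (C (g n)) B n d h3 (fun x hx hx' => (hB d n h1 h2 h3 x hx hx').2)
      rw [Real.dist_eq, sub_zero, abs_lt]
      constructor <;> linarith
    have h2 : Tendsto (dn θ B) (η : Filter ℕ) (𝓝 α) := by
      simpa using hdiff.add hgD
    rw [tendsto_nhds_unique (hν B) h2]
    exact hlim
  · intro i
    refine tendsto_nhds_unique (hν (C i \ B)) ?_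
    rw [Metric.tendsto_nhds]
    intro ε hε
    obtain ⟨d, hd⟩ := hsmall ε hε
    filter_upwards [hev d, hg.eventually (eventually_ge_atTop i)] with n ⟨h1, h2, h3⟩ h4
    have e1 := dn_aux hθ (C i \ B) ∅ n d h3 (fun x hx hx' hx'' =>
      (hx''.2 ((hB d n h1 h2 h3 x hx hx').2 (hCm h4 hx''.1))).elim)
    rw [dn_empty] at e1
    rw [Real.dist_eq, sub_zero, abs_of_nonneg (dn_nonneg hθ _ n)]
    linarith

lemma ff_strictMono {θ : ℝ} (hθ : 1 ≤ θ) : StrictMono (ff θ) := by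
  apply strictMono_nat_of_lt_succ
  intro n
  have h1 : (ff θ n : ℝ) ≤ θ * 2 ^ n := Nat.floor_le (pos_aux hθ n).le
  have h2 : (1:ℝ) ≤ 2 ^ n := one_le_pow₀ (by norm_num)
  have h3 : ff θ n + 1 ≤ ff θ (n + 1) := by
    apply Nat.le_floor
    push_cast
    rw [pow_succ]
    nlinarith
  omega

lemma exists_of_thin (η : Ultrafilter ℕ) (hη : (η : Filter ℕ) ≤ Filter.cofinite)
    (θ : ℝ) (hθ : 1 ≤ θ) (A : Set ℕ) (hA : A ∈ η) (hT : ThinSet A) :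
    ∃ X ∈ Ultrafilter.map (ff θ) η,
        ∃ e : ℕ → ℕ, StrictMono e ∧ Set.range e = X ∧
          Tendsto (fun k => (e (k + 1) : ℝ) / (e k : ℝ)) atTop atTop := by
  have hinf : (Set.ofPred (fun n => n ∈ A)).Infinite := by
    intro hfin
    have : Aᶜ ∈ (η : Filter ℕ) := hη (by
      rw [mem_cofinite, compl_compl]; exact hfin)
    exact (Ultrafilter.compl_mem_iff_notMem.1 this) hA
  have hsm := Nat.nth_strictMono hinf
  refine ⟨ff θ '' A, ?_, fun k => ff θ (Nat.nth (fun n => n ∈ A) k), (ff_strictMono hθ).comp hsm,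
    ?_, ?_⟩
  · exact Filter.image_mem_map hA
  · have := Nat.range_nth_of_infinite hinf
    rw [← Function.comp_def, Set.range_comp, this]
    rfl
  · rw [tendsto_atTop]
    intro b
    obtain ⟨d, hd⟩ := pow_unbounded_of_one_lt (b + 1) (by norm_num : (1:ℝ) < 2)
    have h1 := thin_gap hT d
    rw [Nat.cofinite_eq_atTop] at h1
    have h2 := (hsm.tendsto_atTop.comp (tendsto_add_atTop_nat 1)).eventually h1
    filter_upwards [h2] with k hk
    have hk' := hk (Nat.nth_mem_of_infinite hinf _) _ (Nat.nth_mem_of_infinite hinf k)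
      (hsm (Nat.lt_succ_self k))
    simp only [Function.comp] at hk'
    set n := Nat.nth (fun n => n ∈ A) k
    set n' := Nat.nth (fun n => n ∈ A) (k + 1)
    have a1 : (ff θ n : ℝ) ≤ θ * 2 ^ n := Nat.floor_le (pos_aux hθ n).le
    have a2 : θ * 2 ^ n' < ff θ n' + 1 := Nat.lt_floor_add_one _
    have a3 : (2:ℝ) ^ n * 2 ^ d ≤ 2 ^ n' := by
      rw [← pow_add]; exact pow_le_pow_right₀ (by norm_num) hk'
    have a5 : (1:ℝ) ≤ 2 ^ n := one_le_pow₀ (by norm_num)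
    have a4 : 1 ≤ ff θ n := Nat.le_floor (by push_cast; nlinarith)
    have a6 : (1:ℝ) ≤ ff θ n := by exact_mod_cast a4
    rw [le_div_iff₀ (by linarith)]
    have a7 : θ * (2 ^ n * 2 ^ d) ≤ θ * 2 ^ n' := by gcongr
    have a8 : (ff θ n : ℝ) * 2 ^ d ≤ θ * 2 ^ n * 2 ^ d := by gcongr
    have a9 : (b + 1) * (ff θ n : ℝ) ≤ 2 ^ d * ff θ n := by gcongr
    nlinarith

lemma thin_of_exists (θ : ℝ) (hθ : 1 ≤ θ) (e : ℕ → ℕ) (he : StrictMono e)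
    (hlim : Tendsto (fun k => (e (k + 1) : ℝ) / (e k : ℝ)) atTop atTop) :
    ThinSet (ff θ ⁻¹' Set.range e) := by
  intro m hm
  obtain ⟨K, hK⟩ := eventually_atTop.1 (hlim.eventually (eventually_gt_atTop ((2:ℝ) ^ (m + 1))))
  refine (Set.finite_Iic (e K + m)).subset ?_
  rintro x ⟨⟨l, hl⟩, n, ⟨k, hk⟩, rfl⟩
  simp only [Set.mem_Iic, add_le_add_iff_right]
  by_contra hcon
  push Not at hcon
  have hn : n ≤ ff θ n := (ff_strictMono hθ).le_apply
  have hKk : K ≤ k := by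
    by_contra h
    have := he (not_le.1 h)
    omega
  have hkl : k < l := he.lt_iff_lt.1 (by rw [hl, hk]; exact ff_strictMono hθ (by simp; omega))
  have h1 := hK k hKk
  have h2 : e (k + 1) ≤ e l := he.monotone hkl
  rw [hl] at h2
  have h2' : (e (k + 1) : ℝ) ≤ ff θ (n + m) := by exact_mod_cast h2
  have a1 : (ff θ (n + m) : ℝ) ≤ θ * 2 ^ (n + m) := Nat.floor_le (pos_aux hθ _).le
  have a2 : θ * 2 ^ n < ff θ n + 1 := Nat.lt_floor_add_one _
  have a5 : (1:ℝ) ≤ 2 ^ n := one_le_pow₀ (by norm_num)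
  have a4 : 1 ≤ ff θ n := Nat.le_floor (by push_cast; nlinarith)
  have a6 : (1:ℝ) ≤ ff θ n := by exact_mod_cast a4
  rw [hk, lt_div_iff₀ (by linarith)] at h1
  have a7 : θ * 2 ^ (n + m) ≤ 2 * ff θ n * 2 ^ m := by
    rw [pow_add, ← mul_assoc]
    exact mul_le_mul_of_nonneg_right (by linarith) (by positivity)
  rw [pow_succ] at h1
  nlinarith

/-- For a free ultrafilter `η` on `ℕ`, `t ∈ [0,1)`, `θ = 2^t` and `𝒰`
the image of `η` under `n ↦ ⌊θ·2^n⌋`: the measure `ν_{(η,t)}` has the additive property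
and `𝒰` contains an infinite set whose increasing enumeration `m_1 < m_2 < ⋯` satisfies
`m_{k+1}/m_k → ∞`, if and only if `η` contains a thin set. -/
theorem stmt18 (η : Ultrafilter ℕ) (hη : (η : Filter ℕ) ≤ Filter.cofinite)
    (t : ℝ) (ht : t ∈ Set.Ico (0:ℝ) 1) :
    (AddProp (nuDen η t) ∧
      ∃ X ∈ Ultrafilter.map (fun n : ℕ => ⌊(2:ℝ) ^ t * 2 ^ n⌋₊) η,
        ∃ e : ℕ → ℕ, StrictMono e ∧ Set.range e = X ∧
          Tendsto (fun k => (e (k + 1) : ℝ) / (e k : ℝ)) atTop atTop) ↔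
    ∃ A ∈ η, ThinSet A := by
  have hθ : 1 ≤ (2:ℝ) ^ t := Real.one_le_rpow (by norm_num) ht.1
  constructor
  · rintro ⟨-, X, hX, e, he, rfl, hlim⟩
    exact ⟨_, hX, thin_of_exists _ hθ e he hlim⟩
  · rintro ⟨A, hA, hT⟩
    exact ⟨addprop_of_thin η hη t hθ A hA hT, exists_of_thin η hη _ hθ A hA hT⟩
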